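/- Let (X, γ) be a probability space and let E₁, …, E_N be pairwise independent measurable subsets of X (γ(Eᵢ ∩ Eⱼ) = γ(Eᵢ)γ(Eⱼ) for i ≠ j). Then for every measurable set E ⊆ X, | ∑ᵢ₌₁^N ( γ(E ∩ Eᵢ) − γ(E) γ(Eᵢ) ) | ≤ √( ∑ᵢ₌₁^N γ(Eᵢ)(1 − γ(Eᵢ)) ). -/

import Mathlib

open MeasureTheory

open ProbabilityTheory

/-!
For indicators, `cov[1_A, 1_B] = γ(A ∩ B) - γ(A) γ(B)`. Hence the sum to be bounded is the
covariance of `1_F` and `S = ∑ 1_{E i}`, and Cauchy–Schwarz bounds its square by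
`Var[1_F] * Var[S]`. Pairwise nonpositive correlation gives `Var[S] ≤ ∑ γ(E i) (1 - γ(E i))`,
while `Var[1_F] = γ(F) (1 - γ(F)) ≤ 1`. A non-measurable `F` may be replaced by its measurable hull,
which meets every measurable set in the same measure.
-/

section Covariance

variable {X : Type*} [MeasurableSpace X] {γ : Measure X} [IsFiniteMeasure γ]

lemma sq_covariance_le_variance_mul_variance {f g : X → ℝ} (hf : MemLp f 2 γ)
    (hg : MemLp g 2 γ) : cov[f, g; γ] ^ 2 ≤ Var[f; γ] * Var[g; γ] := by
  have quadratic_nonneg (t : ℝ) :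
      0 ≤ Var[f; γ] * (t * t) + 2 * cov[f, g; γ] * t + Var[g; γ] := by
    calc
      0 ≤ Var[t • f + g; γ] := variance_nonneg _ _
      _ = Var[f; γ] * (t * t) + 2 * cov[f, g; γ] * t + Var[g; γ] := by
        rw [variance_add (hf.const_smul t) hg, variance_smul, covariance_smul_left]
        ring
  have discrim_nonpos := discrim_le_zero quadratic_nonneg
  rw [discrim] at discrim_nonpos
  linarith

lemma abs_covariance_le_sqrt_variance_mul_sqrt_variance {f g : X → ℝ} (hf : MemLp f 2 γ)
    (hg : MemLp g 2 γ) : |cov[f, g; γ]| ≤ √Var[f; γ] * √Var[g; γ] := by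
  rw [← Real.sqrt_mul (variance_nonneg f γ)]
  exact Real.abs_le_sqrt (sq_covariance_le_variance_mul_variance hf hg)

lemma variance_sum_le_sum_variance_of_covariance_nonpos {ι : Type*} {s : Finset ι}
    {f : ι → X → ℝ} (hf : ∀ i ∈ s, MemLp (f i) 2 γ)
    (hcov : (s : Set ι).Pairwise fun i j ↦ cov[f i, f j; γ] ≤ 0) :
    Var[∑ i ∈ s, f i; γ] ≤ ∑ i ∈ s, Var[f i; γ] := by
  classical
  rw [variance_sum' hf]
  refine Finset.sum_le_sum fun i hi ↦ ?_
  rw [← covariance_self (hf i hi).aemeasurable, ← Finset.add_sum_erase s _ hi]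
  refine add_le_of_nonpos_right (Finset.sum_nonpos fun j hj ↦ ?_)
  exact hcov hi (Finset.mem_of_mem_erase hj) (Finset.ne_of_mem_erase hj).symm

end Covariance

section Indicator

variable {X : Type*} [MeasurableSpace X] {γ : Measure X}

lemma memLp_indicator_one [IsFiniteMeasure γ] {p : ENNReal} {A : Set X} (hA : MeasurableSet A) :
    MemLp (A.indicator (1 : X → ℝ)) p γ :=
  (memLp_const 1).indicator hA

variable [IsProbabilityMeasure γ]

lemma measureReal_mul_one_sub_le_one (A : Set X) : γ.real A * (1 - γ.real A) ≤ 1 :=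
  mul_le_one₀ measureReal_le_one (sub_nonneg.2 measureReal_le_one)
    (sub_le_self 1 measureReal_nonneg)

lemma covariance_indicator_one {A B : Set X} (hA : MeasurableSet A) (hB : MeasurableSet B) :
    cov[A.indicator 1, B.indicator 1; γ] = γ.real (A ∩ B) - γ.real A * γ.real B := by
  rw [covariance_eq_sub (memLp_indicator_one hA) (memLp_indicator_one hB),
    ← Set.inter_indicator_one, integral_indicator_one hA, integral_indicator_one hB,
    integral_indicator_one (hA.inter hB)]

lemma variance_indicator_one {A : Set X} (hA : MeasurableSet A) :
    Var[A.indicator 1; γ] = γ.real A * (1 - γ.real A) := by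
  rw [← covariance_self (memLp_indicator_one (p := 2) hA).aemeasurable,
    covariance_indicator_one hA hA, Set.inter_self]
  ring

lemma covariance_indicator_one_nonpos {A B : Set X} (hA : MeasurableSet A)
    (hB : MeasurableSet B) (hAB : γ (A ∩ B) ≤ γ A * γ B) :
    cov[A.indicator 1, B.indicator 1; γ] ≤ 0 := by
  rw [covariance_indicator_one hA hB, sub_nonpos]
  calc
    γ.real (A ∩ B) ≤ (γ A * γ B).toReal := ENNReal.toReal_mono (by finiteness) hAB
    _ = γ.real A * γ.real B := ENNReal.toReal_mul

lemma covariance_indicator_one_sum {ι : Type*} {s : Finset ι} {E : ι → Set X} {F : Set X}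
    (hF : MeasurableSet F) (hE : ∀ i ∈ s, MeasurableSet (E i)) :
    cov[F.indicator 1, ∑ i ∈ s, (E i).indicator 1; γ] =
      ∑ i ∈ s, (γ.real (F ∩ E i) - γ.real F * γ.real (E i)) := by
  rw [covariance_sum_right' (fun i hi ↦ memLp_indicator_one (hE i hi)) (memLp_indicator_one hF)]
  exact Finset.sum_congr rfl fun i hi ↦ covariance_indicator_one hF (hE i hi)

lemma variance_sum_indicator_one_le {ι : Type*} {s : Finset ι} {E : ι → Set X}
    (hE : ∀ i ∈ s, MeasurableSet (E i))
    (hcorr : (s : Set ι).Pairwise fun i j ↦ γ (E i ∩ E j) ≤ γ (E i) * γ (E j)) :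
    Var[∑ i ∈ s, (E i).indicator 1; γ] ≤ ∑ i ∈ s, γ.real (E i) * (1 - γ.real (E i)) := by
  calc
    Var[∑ i ∈ s, (E i).indicator 1; γ] ≤ ∑ i ∈ s, Var[(E i).indicator 1; γ] :=
      variance_sum_le_sum_variance_of_covariance_nonpos
        (fun i hi ↦ memLp_indicator_one (hE i hi))
        fun i hi j hj hij ↦ covariance_indicator_one_nonpos (hE i hi) (hE j hj) (hcorr hi hj hij)
    _ = ∑ i ∈ s, γ.real (E i) * (1 - γ.real (E i)) :=
      Finset.sum_congr rfl fun i hi ↦ variance_indicator_one (hE i hi)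

end Indicator

theorem stmt3_general {X ι : Type*} [MeasurableSpace X] (γ : Measure X) [IsProbabilityMeasure γ]
    (s : Finset ι) (E : ι → Set X) (hE : ∀ i ∈ s, MeasurableSet (E i))
    (hcorr : (s : Set ι).Pairwise fun i j ↦ γ (E i ∩ E j) ≤ γ (E i) * γ (E j)) (F : Set X) :
    |∑ i ∈ s, (γ.real (F ∩ E i) - γ.real F * γ.real (E i))| ≤
      √(γ.real F * (1 - γ.real F)) * √(∑ i ∈ s, γ.real (E i) * (1 - γ.real (E i))) := by
  wlog hF : MeasurableSet F generalizing F
  · have hull_bound := this (toMeasurable γ F) (measurableSet_toMeasurable γ F)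
    have hull_inter (i : ι) (hi : i ∈ s) : γ.real (toMeasurable γ F ∩ E i) = γ.real (F ∩ E i) :=
      congrArg ENNReal.toReal (Measure.measure_toMeasurable_inter (hE i hi) (measure_ne_top γ F))
    have hull : γ.real (toMeasurable γ F) = γ.real F :=
      congrArg ENNReal.toReal (measure_toMeasurable F)
    rwa [hull, Finset.sum_congr rfl fun i hi ↦ by rw [hull_inter i hi]] at hull_bound
  have hS : MemLp (∑ i ∈ s, (E i).indicator (1 : X → ℝ)) 2 γ :=
    memLp_finsetSum' s fun i hi ↦ memLp_indicator_one (hE i hi)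
  rw [← covariance_indicator_one_sum hF hE, ← variance_indicator_one hF]
  calc
    |cov[F.indicator 1, ∑ i ∈ s, (E i).indicator 1; γ]|
        ≤ √Var[F.indicator 1; γ] * √Var[∑ i ∈ s, (E i).indicator 1; γ] :=
      abs_covariance_le_sqrt_variance_mul_sqrt_variance (memLp_indicator_one hF) hS
    _ ≤ √Var[F.indicator 1; γ] * √(∑ i ∈ s, γ.real (E i) * (1 - γ.real (E i))) := by
      gcongr
      exact variance_sum_indicator_one_le hE hcorr

/-- For pairwise independent sets `E 1, …, E N` in a probability space `(X, γ)` and any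
measurable set `F`, `|∑ (γ (F ∩ E i) − γ F · γ (E i))| ≤ √(∑ γ (E i) (1 − γ (E i)))`. -/
theorem stmt3 {X : Type*} [MeasurableSpace X] (γ : Measure X) [IsProbabilityMeasure γ]
    (N : ℕ) (E : Fin N → Set X) (hE : ∀ i, MeasurableSet (E i))
    (hind : ∀ i j, i ≠ j → γ (E i ∩ E j) = γ (E i) * γ (E j))
    (F : Set X) (hF : MeasurableSet F) :
    |∑ i : Fin N, ((γ (F ∩ E i)).toReal - (γ F).toReal * (γ (E i)).toReal)| ≤
      Real.sqrt (∑ i : Fin N, (γ (E i)).toReal * (1 - (γ (E i)).toReal)) := by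
  refine (stmt3_general γ .univ E (fun i _ ↦ hE i) (fun i _ j _ h ↦ (hind i j h).le) F).trans ?_
  exact mul_le_of_le_one_left (Real.sqrt_nonneg _)
    (Real.sqrt_le_one.2 (measureReal_mul_one_sub_le_one F))
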